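/- Let A = (A₁, A₂) be a pure commuting 2-contraction on H with D_{A*} injective, let λ = (λ₁,λ₂) ∈ 𝔻², λ ≠ 0, assume the pair (B₁(λ),B₂(λ)) is also pure, and let (z₁,z₂) ∈ 𝔻². Write (w₁,w₂) = Φ_λ(z₁,z₂). Then Φ_λ(z₁,z₂) ∈ σ_T^{(2)}(B₁(λ),B₂(λ)) if and only if there exists X ∈ H ⊕ H such that θ_A(z₁,z₂)(D_A((1_{H⊕H} − Λ*A)⁻¹(D_Λ X))) = 0 and X ≠ ((B₁(λ) − w₁)h, (w₂ − B₂(λ))h) for every h ∈ H. -/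

import Mathlib

open ContinuousLinearMap Filter

/-!
Encode a point `z` of the ball by the row operator `Z (x, y) = z₁ x + z₂ y`. Two factorizations
hold for row contractions `A`, `Z` and a strict row contraction `L`:

* `θ_A(Z) D_A = D_{A*} (1 - Z A*)⁻¹ (Z - A)`;
* `Φ_L(A) - Φ_L(Z) = D_{L*} (1 - Z L*)⁻¹ (Z - A) (1 - L* A)⁻¹ D_L`.

As `D_{A*}` and `D_{L*}` are injective, `θ_A(Z) D_A (1 - L* A)⁻¹ D_L x` vanishes exactly when
`Φ_L(A) x = Φ_L(Z) x`. When `L` is the row of a scalar pair `λ`, `D_L = 1 - (1 + s)⁻¹ L* L`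
shows that `Φ_L(Z)` is the row of the point `w = Φ_λ(z)`, so that this equation reads
`(B₁ - w₁) x₁ + (B₂ - w₂) x₂ = 0`: up to the sign of `x₂`, it is the kernel condition defining
`σ_T^{(2)}`.
-/

section PushThrough

open scoped Ring

theorem isUnit_and_inverse_eq_of_mul_eq_one {M₀ : Type*} [MonoidWithZero M₀] {a b : M₀}
    (hba : b * a = 1) (hab : a * b = 1) : IsUnit a ∧ a⁻¹ʳ = b :=
  ⟨⟨⟨a, b, hab, hba⟩, rfl⟩, Ring.inverse_unit ⟨a, b, hab, hba⟩⟩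

variable {𝕜 E F : Type*} [Ring 𝕜] [TopologicalSpace E] [AddCommGroup E] [Module 𝕜 E]
  [TopologicalSpace F] [AddCommGroup F] [Module 𝕜 F]

theorem inverse_comp_cancel_left [IsTopologicalAddGroup F] {S : F →L[𝕜] F} (hS : IsUnit S)
    (X : E →L[𝕜] F) : S⁻¹ʳ ∘L S ∘L X = X := by
  rw [← comp_assoc, ← mul_def, Ring.inverse_mul_cancel S hS, one_def, id_comp]

theorem comp_inverse_cancel_right [IsTopologicalAddGroup E] {S : E →L[𝕜] E} (hS : IsUnit S)
    (X : E →L[𝕜] F) : X ∘L S ∘L S⁻¹ʳ = X := by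
  rw [← mul_def, Ring.mul_inverse_cancel S hS, one_def, comp_id]

theorem inverse_one_sub_comp_comp [IsTopologicalAddGroup E] [IsTopologicalAddGroup F]
    {A : E →L[𝕜] F} {B : F →L[𝕜] E} (hAB : IsUnit (1 - A ∘L B))
    (hBA : IsUnit (1 - B ∘L A)) : (1 - A ∘L B)⁻¹ʳ ∘L A = A ∘L (1 - B ∘L A)⁻¹ʳ := by
  have hcomm : A ∘L (1 - B ∘L A) = (1 - A ∘L B) ∘L A := by
    simp only [sub_comp, comp_sub, comp_assoc, one_def, id_comp, comp_id]
  calc (1 - A ∘L B)⁻¹ʳ ∘L A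
      = (1 - A ∘L B)⁻¹ʳ ∘L (A ∘L (1 - B ∘L A)) ∘L (1 - B ∘L A)⁻¹ʳ := by
        rw [comp_assoc A, comp_inverse_cancel_right hBA]
    _ = A ∘L (1 - B ∘L A)⁻¹ʳ := by
        rw [hcomm, comp_assoc, inverse_comp_cancel_left hAB]

end PushThrough

section Operators

open scoped InnerProduct Ring

variable {H K : Type*} [NormedAddCommGroup H] [InnerProductSpace ℂ H]
  [NormedAddCommGroup K] [InnerProductSpace ℂ K]

theorem smul_one_nonneg {s : ℝ} (hs : 0 ≤ s) : 0 ≤ (s : ℂ) • (1 : H →L[ℂ] H) :=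
  (nonneg_iff_isPositive _).2 (isPositive_one.smul_of_nonneg (by exact_mod_cast hs))

variable [CompleteSpace H] [CompleteSpace K]

-- `X* X` commutes with `D`, so `X* X D = -X* E X` is both nonnegative and nonpositive.
theorem comp_eq_zero_of_comp_eq_neg_comp {X : K →L[ℂ] H} {D : K →L[ℂ] K} {E : H →L[ℂ] H}
    (hD : 0 ≤ D) (hE : 0 ≤ E) (h : E ∘L X = -(X ∘L D)) : X ∘L D = 0 := by
  have hprod : (X† ∘L X) * D = -(X† ∘L E ∘L X) := by
    rw [h, comp_neg, neg_neg, mul_def, comp_assoc]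
  have hXX : 0 ≤ X† ∘L X := (nonneg_iff_isPositive _).2 (isPositive_adjoint_comp_self X)
  have hXEX : 0 ≤ X† ∘L E ∘L X :=
    (nonneg_iff_isPositive _).2 (((nonneg_iff_isPositive E).1 hE).adjoint_conj X)
  have hcomm : Commute (X† ∘L X) D :=
    (hXX.isSelfAdjoint.commute_iff hD.isSelfAdjoint).2 (hprod ▸ hXEX.isSelfAdjoint.neg)
  have hzero : (X† ∘L X) * D = 0 :=
    le_antisymm (hprod ▸ neg_nonpos.2 hXEX) (hcomm.mul_nonneg hXX hD)
  ext v
  have hker : D v ∈ (X† ∘L X).ker := DFunLike.congr_fun hzero v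
  rwa [ker_adjoint_comp_self] at hker

theorem comp_eq_comp_of_comp_mul_self_eq {T : K →L[ℂ] H} {D : K →L[ℂ] K} {E : H →L[ℂ] H}
    (hD : 0 ≤ D) (hE : 0 ≤ E) (h : T ∘L (D * D) = (E * E) ∘L T) : T ∘L D = E ∘L T := by
  set X := T ∘L D - E ∘L T with hX
  have hEX : E ∘L X = -(X ∘L D) := by
    rw [mul_def, mul_def, comp_assoc] at h
    simp only [hX, comp_sub, sub_comp, comp_assoc, neg_sub, h]
  have hXD : X ∘L D = 0 := comp_eq_zero_of_comp_eq_neg_comp hD hE hEX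
  have hXX : X† ∘L X = D ∘L T† ∘L X := by
    have hXadj : X† = D ∘L T† - T† ∘L E := by
      rw [hX, map_sub, adjoint_comp, adjoint_comp, hD.isSelfAdjoint.adjoint_eq,
        hE.isSelfAdjoint.adjoint_eq]
    rw [hXadj, sub_comp, comp_assoc, comp_assoc, hEX, hXD, neg_zero, comp_zero, sub_zero]
  have hsq : (X† ∘L X)† ∘L (X† ∘L X) = 0 := by
    rw [adjoint_comp, adjoint_adjoint]
    nth_rw 2 [hXX]
    rw [comp_assoc, ← comp_assoc X, hXD, zero_comp, comp_zero]
  rw [adjoint_comp_self_eq_zero_iff, adjoint_comp_self_eq_zero_iff] at hsq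
  exact sub_eq_zero.1 hsq

/-- The defect operator `D_T = (1 - T* T)^{1/2}`. It is meaningful for contractions `T` only:
otherwise `CFC.sqrt` returns `0`. -/
noncomputable def defectOp (T : K →L[ℂ] H) : K →L[ℂ] K :=
  CFC.sqrt (1 - T† ∘L T)

theorem defectOp_eq_of_mul_self {T : K →L[ℂ] H} {D : K →L[ℂ] K} (hD : 0 ≤ D)
    (h : D * D = 1 - T† ∘L T) : defectOp T = D :=
  CFC.sqrt_unique h hD

theorem adjoint_comp_self_le_one {T : K →L[ℂ] H} (hT : ‖T‖ ≤ 1) : T† ∘L T ≤ 1 := by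
  have hpos : 0 ≤ T† ∘L T := (nonneg_iff_isPositive _).2 (isPositive_adjoint_comp_self T)
  rw [← CStarAlgebra.norm_le_one_iff_of_nonneg _ hpos, norm_adjoint_comp_self]
  exact mul_le_one₀ hT (norm_nonneg T) hT

theorem norm_le_one_of_mul_self_eq_one_sub_comp_adjoint {T : K →L[ℂ] H} {E : H →L[ℂ] H}
    (hE : IsSelfAdjoint E) (h : E * E = 1 - T ∘L T†) : ‖T‖ ≤ 1 := by
  have hle : T ∘L T† ≤ 1 := sub_nonneg.1 (h ▸ hE.mul_self_nonneg)
  have hpos : 0 ≤ T ∘L T† := (nonneg_iff_isPositive _).2 (isPositive_self_comp_adjoint T)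
  have hnorm : ‖T ∘L T†‖ = ‖T‖ * ‖T‖ := by simpa using norm_adjoint_comp_self (T†)
  rw [← CStarAlgebra.norm_le_one_iff_of_nonneg _ hpos, hnorm] at hle
  nlinarith [norm_nonneg T]

theorem defectOp_mul_self {T : K →L[ℂ] H} (hT : ‖T‖ ≤ 1) :
    defectOp T * defectOp T = 1 - T† ∘L T :=
  CFC.sqrt_mul_sqrt_self _ (sub_nonneg.2 (adjoint_comp_self_le_one hT))

theorem comp_defectOp {T : K →L[ℂ] H} (hT : ‖T‖ ≤ 1) :
    T ∘L defectOp T = defectOp (T†) ∘L T := by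
  refine comp_eq_comp_of_comp_mul_self_eq (CFC.sqrt_nonneg _) (CFC.sqrt_nonneg _) ?_
  rw [defectOp_mul_self hT, defectOp_mul_self (by simpa using hT), adjoint_adjoint, comp_sub,
    sub_comp, comp_assoc]
  rfl

/-- The characteristic function `θ_A` of the contraction `A`, at a point of the ball encoded by its
row operator `Z`. It is meaningful when `1 - Z A*` is invertible, since `Ring.inverse` is `0` on
non-units. -/
noncomputable def characteristicFn (A Z : K →L[ℂ] H) : K →L[ℂ] H :=
  -A + defectOp (A†) ∘L (1 - Z ∘L A†)⁻¹ʳ ∘L Z ∘L defectOp A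

theorem characteristicFn_comp_defectOp {A Z : K →L[ℂ] H} (hA : ‖A‖ ≤ 1)
    (hZ : IsUnit (1 - Z ∘L A†)) :
    characteristicFn A Z ∘L defectOp A =
      defectOp (A†) ∘L (1 - Z ∘L A†)⁻¹ʳ ∘L (Z - A) := by
  have hsq : defectOp A ∘L defectOp A = 1 - A† ∘L A := defectOp_mul_self hA
  calc characteristicFn A Z ∘L defectOp A
      = defectOp (A†) ∘L (-A + (1 - Z ∘L A†)⁻¹ʳ ∘L (Z - Z ∘L A† ∘L A)) := by
        simp only [characteristicFn, add_comp, neg_comp, comp_assoc, comp_defectOp hA, hsq,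
          comp_add, comp_neg, comp_sub, one_def, comp_id]
    _ = defectOp (A†) ∘L (-((1 - Z ∘L A†)⁻¹ʳ ∘L (1 - Z ∘L A†) ∘L A) +
          (1 - Z ∘L A†)⁻¹ʳ ∘L (Z - Z ∘L A† ∘L A)) := by
        rw [inverse_comp_cancel_left hZ]
    _ = defectOp (A†) ∘L (1 - Z ∘L A†)⁻¹ʳ ∘L (Z - A) := by
        simp only [sub_comp, comp_sub, one_def, id_comp, comp_assoc, comp_add, comp_neg]
        abel

theorem characteristicFn_apply_defectOp_eq_zero_iff {A Z : K →L[ℂ] H} (hA : ‖A‖ ≤ 1)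
    (hinj : Function.Injective (defectOp (A†))) (hZ : IsUnit (1 - Z ∘L A†)) (y : K) :
    characteristicFn A Z (defectOp A y) = 0 ↔ A y = Z y := by
  have hfactor : characteristicFn A Z (defectOp A y) =
      defectOp (A†) ((1 - Z ∘L A†)⁻¹ʳ (Z y - A y)) :=
    DFunLike.congr_fun (characteristicFn_comp_defectOp hA hZ) y
  rw [hfactor, map_eq_zero_iff _ hinj,
    map_eq_zero_iff _ (isUnit_iff_bijective.1 hZ.ringInverse).injective, sub_eq_zero, eq_comm]

/-- The value at `A` of the involutive automorphism `Φ_L` of the ball of row contractions attached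
to the strict contraction `L`. It is meaningful when `1 - A L*` is invertible. -/
noncomputable def ballAutomorphism (L A : K →L[ℂ] H) : K →L[ℂ] H :=
  L - defectOp (L†) ∘L (1 - A ∘L L†)⁻¹ʳ ∘L A ∘L defectOp L

theorem ballAutomorphism_sub_ballAutomorphism {L A Z : K →L[ℂ] H} (hA : IsUnit (1 - A ∘L L†))
    (hA' : IsUnit (1 - L† ∘L A)) (hZ : IsUnit (1 - Z ∘L L†)) :
    ballAutomorphism L A - ballAutomorphism L Z =
      defectOp (L†) ∘L (1 - Z ∘L L†)⁻¹ʳ ∘L (Z - A) ∘L (1 - L† ∘L A)⁻¹ʳ ∘L defectOp L := by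
  have hmid : Z - A = Z ∘L (1 - L† ∘L A) - (1 - Z ∘L L†) ∘L A := by
    simp only [comp_sub, sub_comp, one_def, id_comp, comp_id, comp_assoc, sub_sub_sub_cancel_right]
  calc ballAutomorphism L A - ballAutomorphism L Z
      = defectOp (L†) ∘L ((1 - Z ∘L L†)⁻¹ʳ ∘L Z - (1 - A ∘L L†)⁻¹ʳ ∘L A) ∘L defectOp L := by
        simp only [ballAutomorphism, sub_sub_sub_cancel_left, sub_comp, comp_sub, comp_assoc]
    _ = defectOp (L†) ∘L ((1 - Z ∘L L†)⁻¹ʳ ∘L (Z - A) ∘L (1 - L† ∘L A)⁻¹ʳ) ∘L defectOp L := by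
        rw [inverse_one_sub_comp_comp hA hA', hmid, sub_comp (Z ∘L _), comp_sub _ (_ ∘L _),
          comp_assoc Z, comp_inverse_cancel_right hA', comp_assoc _ A, inverse_comp_cancel_left hZ]
    _ = _ := by simp only [comp_assoc]

theorem ballAutomorphism_apply_eq_iff {L A Z : K →L[ℂ] H}
    (hinj : Function.Injective (defectOp (L†))) (hA : IsUnit (1 - A ∘L L†))
    (hA' : IsUnit (1 - L† ∘L A)) (hZ : IsUnit (1 - Z ∘L L†)) (x : K) :
    ballAutomorphism L A x = ballAutomorphism L Z x ↔
      A ((1 - L† ∘L A)⁻¹ʳ (defectOp L x)) = Z ((1 - L† ∘L A)⁻¹ʳ (defectOp L x)) := by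
  have hfactor : ballAutomorphism L A x - ballAutomorphism L Z x = defectOp (L†)
      ((1 - Z ∘L L†)⁻¹ʳ ((Z - A) ((1 - L† ∘L A)⁻¹ʳ (defectOp L x)))) :=
    DFunLike.congr_fun (ballAutomorphism_sub_ballAutomorphism hA hA' hZ) x
  rw [← sub_eq_zero, hfactor, map_eq_zero_iff _ hinj,
    map_eq_zero_iff _ (isUnit_iff_bijective.1 hZ.ringInverse).injective, sub_apply, sub_eq_zero,
    eq_comm]

theorem characteristicFn_eq_zero_iff_ballAutomorphism_eq {L A Z : K →L[ℂ] H} (hA : ‖A‖ ≤ 1)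
    (hinjA : Function.Injective (defectOp (A†))) (hinjL : Function.Injective (defectOp (L†)))
    (hZA : IsUnit (1 - Z ∘L A†)) (hAL : IsUnit (1 - A ∘L L†)) (hLA : IsUnit (1 - L† ∘L A))
    (hZL : IsUnit (1 - Z ∘L L†)) (x : K) :
    characteristicFn A Z (defectOp A ((1 - L† ∘L A)⁻¹ʳ (defectOp L x))) = 0 ↔
      ballAutomorphism L A x = ballAutomorphism L Z x := by
  rw [characteristicFn_apply_defectOp_eq_zero_iff hA hinjA hZA,
    ballAutomorphism_apply_eq_iff hinjL hAL hLA hZL]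

theorem smul_one_mul_self_eq_one_sub_comp_adjoint {L : K →L[ℂ] H} {s : ℂ}
    (hL : L ∘L L† = (1 - s ^ 2) • 1) : (s • (1 : H →L[ℂ] H)) * (s • 1) = 1 - L ∘L L† := by
  rw [hL, smul_mul_smul_comm, one_mul, sub_smul, one_smul, sub_sub_cancel, sq]

theorem defectOp_adjoint_of_comp_adjoint_eq_smul {L : K →L[ℂ] H} {s : ℝ} (hs : 0 ≤ s)
    (hL : L ∘L L† = (1 - (s : ℂ) ^ 2) • 1) : defectOp (L†) = (s : ℂ) • 1 :=
  defectOp_eq_of_mul_self (smul_one_nonneg hs) <| by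
    rw [adjoint_adjoint, smul_one_mul_self_eq_one_sub_comp_adjoint hL]

theorem defectOp_of_comp_adjoint_eq_smul {L : K →L[ℂ] H} {s : ℝ} (hs : 0 ≤ s)
    (hL : L ∘L L† = (1 - (s : ℂ) ^ 2) • 1) :
    defectOp L = 1 - (1 + (s : ℂ))⁻¹ • L† ∘L L := by
  have hs0 : 0 < 1 + s := by positivity
  have hs1 : 1 + (s : ℂ) ≠ 0 := by exact_mod_cast hs0.ne'
  have hpos : 0 ≤ 1 - (1 + (s : ℂ))⁻¹ • L† ∘L L := by
    have hnorm : ‖L‖ ≤ 1 :=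
      norm_le_one_of_mul_self_eq_one_sub_comp_adjoint (smul_one_nonneg hs).isSelfAdjoint
        (smul_one_mul_self_eq_one_sub_comp_adjoint hL)
    have hsplit : 1 - (1 + (s : ℂ))⁻¹ • L† ∘L L =
        (1 + (s : ℂ))⁻¹ • ((s : ℂ) • 1 + (1 - L† ∘L L)) := by
      match_scalars <;> field_simp
      ring
    have hsum : 0 ≤ (s : ℂ) • 1 + (1 - L† ∘L L) :=
      add_nonneg (smul_one_nonneg hs) (sub_nonneg.2 (adjoint_comp_self_le_one hnorm))
    rw [nonneg_iff_isPositive] at hsum ⊢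
    exact hsplit ▸ hsum.smul_of_nonneg (by exact_mod_cast inv_nonneg.2 hs0.le)
  have hproj : (L† ∘L L) * (L† ∘L L) = (1 - (s : ℂ) ^ 2) • L† ∘L L := by
    rw [mul_def, comp_assoc, ← comp_assoc L, hL, smul_comp, comp_smul, one_def, id_comp]
  refine defectOp_eq_of_mul_self hpos ?_
  simp only [sub_mul, mul_sub, one_mul, mul_one, smul_mul_assoc, mul_smul_comm, hproj]
  match_scalars <;> field_simp
  ring

theorem ballAutomorphism_of_comp_adjoint_eq_smul {L Z : K →L[ℂ] H} {s : ℝ} {c : ℂ}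
    (hs : 0 ≤ s) (hL : L ∘L L† = (1 - (s : ℂ) ^ 2) • 1) (hZ : Z ∘L L† = c • 1) (hc : 1 - c ≠ 0) :
    ballAutomorphism L Z = L - ((s : ℂ) / (1 - c)) • (Z - (c / (1 + s)) • L) := by
  have hinv : (1 - Z ∘L L†)⁻¹ʳ = (1 - c)⁻¹ • 1 := by
    have hsub : 1 - Z ∘L L† = (1 - c) • 1 := by rw [hZ, sub_smul, one_smul]
    refine (isUnit_and_inverse_eq_of_mul_eq_one ?_ ?_).2 <;> rw [hsub, smul_mul_smul_comm, one_mul]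
    · rw [inv_mul_cancel₀ hc, one_smul]
    · rw [mul_inv_cancel₀ hc, one_smul]
  have hZD : Z ∘L defectOp L = Z - (c / (1 + (s : ℂ))) • L := by
    rw [defectOp_of_comp_adjoint_eq_smul hs hL, comp_sub, one_def, comp_id, comp_smul,
      ← comp_assoc, hZ, smul_comp, one_def, id_comp, smul_smul, div_eq_inv_mul]
  rw [ballAutomorphism, defectOp_adjoint_of_comp_adjoint_eq_smul hs hL, hinv, hZD]
  simp only [one_def, smul_comp, id_comp, smul_smul, div_eq_mul_inv]

end Operators

theorem one_sub_mul_div_one_sub_sq {k : Type*} [Field k] {s c : k} (hs : 1 - s ^ 2 ≠ 0) :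
    (1 - s) * (c / (1 - s ^ 2)) = c / (1 + s) := by
  have hfac : 1 - s ^ 2 = (1 - s) * (1 + s) := by ring
  rw [hfac] at hs ⊢
  rw [← mul_div_assoc, mul_div_mul_left _ _ (left_ne_zero_of_mul hs)]

theorem one_sub_pairing_ne_zero {z₁ z₂ w₁ w₂ : ℂ} (hz : ‖z₁‖ ^ 2 + ‖z₂‖ ^ 2 < 1)
    (hw : ‖w₁‖ ^ 2 + ‖w₂‖ ^ 2 < 1) :
    1 - (z₁ * starRingEnd ℂ w₁ + z₂ * starRingEnd ℂ w₂) ≠ 0 := by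
  have hle : ‖z₁ * starRingEnd ℂ w₁ + z₂ * starRingEnd ℂ w₂‖ ≤ ‖z₁‖ * ‖w₁‖ + ‖z₂‖ * ‖w₂‖ := by
    simpa using norm_add_le (z₁ * starRingEnd ℂ w₁) (z₂ * starRingEnd ℂ w₂)
  intro h
  rw [← sub_eq_zero.1 h, norm_one] at hle
  nlinarith [sq_nonneg (‖z₁‖ - ‖w₁‖), sq_nonneg (‖z₂‖ - ‖w₂‖)]

section Rows

open scoped InnerProduct Ring ComplexConjugate

variable {E₁ E₂ H : Type*} [NormedAddCommGroup E₁] [InnerProductSpace ℂ E₁]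
  [NormedAddCommGroup E₂] [InnerProductSpace ℂ E₂]
  [NormedAddCommGroup H] [InnerProductSpace ℂ H]

/-- The row operator `(x, y) ↦ C₁ x + C₂ y` on the Hilbert sum. -/
noncomputable def rowOp (C₁ : E₁ →L[ℂ] H) (C₂ : E₂ →L[ℂ] H) : WithLp 2 (E₁ × E₂) →L[ℂ] H :=
  C₁.coprod C₂ ∘L (WithLp.prodContinuousLinearEquiv 2 ℂ E₁ E₂ : WithLp 2 (E₁ × E₂) →L[ℂ] E₁ × E₂)

theorem rowOp_apply (C₁ : E₁ →L[ℂ] H) (C₂ : E₂ →L[ℂ] H) (v : WithLp 2 (E₁ × E₂)) :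
    rowOp C₁ C₂ v = C₁ v.fst + C₂ v.snd :=
  rfl

theorem eq_rowOp {C : WithLp 2 (E₁ × E₂) →L[ℂ] H} {C₁ : E₁ →L[ℂ] H} {C₂ : E₂ →L[ℂ] H}
    (hC : ∀ x y, C ((WithLp.equiv 2 (E₁ × E₂)).symm (x, y)) = C₁ x + C₂ y) : C = rowOp C₁ C₂ :=
  ContinuousLinearMap.ext fun v => hC v.fst v.snd

theorem rowOp_comp_adjoint_rowOp [CompleteSpace E₁] [CompleteSpace E₂] [CompleteSpace H]
    (C₁ D₁ : E₁ →L[ℂ] H) (C₂ D₂ : E₂ →L[ℂ] H) :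
    rowOp C₁ C₂ ∘L (rowOp D₁ D₂)† = C₁ ∘L D₁† + C₂ ∘L D₂† := by
  have hadj : ∀ h, ((rowOp D₁ D₂)†) h = WithLp.toLp 2 ((D₁†) h, (D₂†) h) := fun h =>
    ext_inner_left ℂ fun v => by
      simp only [adjoint_inner_right, rowOp_apply, inner_add_left, WithLp.prod_inner_apply,
        WithLp.ofLp_fst, WithLp.ofLp_snd]
  ext h
  rw [comp_apply, hadj, rowOp_apply]
  rfl

variable (H) in
/-- The row operator `(x, y) ↦ z₁ x + z₂ y` by which a point `(z₁, z₂)` of `ℂ²` acts on `H ⊕ H`. -/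
noncomputable def scalarRow (z₁ z₂ : ℂ) : WithLp 2 (H × H) →L[ℂ] H :=
  rowOp (z₁ • 1) (z₂ • 1)

theorem scalarRow_apply (z₁ z₂ : ℂ) (v : WithLp 2 (H × H)) :
    scalarRow H z₁ z₂ v = z₁ • v.fst + z₂ • v.snd :=
  rfl

theorem eq_scalarRow {C : WithLp 2 (H × H) →L[ℂ] H} {z₁ z₂ : ℂ}
    (hC : ∀ x y, C ((WithLp.equiv 2 (H × H)).symm (x, y)) = z₁ • x + z₂ • y) :
    C = scalarRow H z₁ z₂ :=
  eq_rowOp hC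

theorem scalarRow_sub (z₁ z₂ w₁ w₂ : ℂ) :
    scalarRow H z₁ z₂ - scalarRow H w₁ w₂ = scalarRow H (z₁ - w₁) (z₂ - w₂) :=
  eq_scalarRow fun x y => by
    simp only [sub_apply, scalarRow_apply, sub_smul]
    exact add_sub_add_comm ..

theorem smul_scalarRow (c z₁ z₂ : ℂ) : c • scalarRow H z₁ z₂ = scalarRow H (c * z₁) (c * z₂) :=
  eq_scalarRow fun x y => by
    simp only [smul_apply, scalarRow_apply, smul_add, mul_smul]
    rfl

/-- The part `σ_T^{(2)}` of the Taylor spectrum: the points `w` at which the Koszul complex of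
`(B₁ - w₁, B₂ - w₂)` fails to be exact in the middle. -/
def middleTaylorSpectrum (B₁ B₂ : H →L[ℂ] H) : Set (ℂ × ℂ) :=
  {w | ∃ p : H × H, (B₁ p.1 - w.1 • p.1) - (B₂ p.2 - w.2 • p.2) = 0 ∧
    ∀ h : H, p ≠ (B₁ h - w.1 • h, B₂ h - w.2 • h)}

theorem mem_middleTaylorSpectrum_iff {B₁ B₂ : H →L[ℂ] H} {w₁ w₂ : ℂ} :
    (w₁, w₂) ∈ middleTaylorSpectrum B₁ B₂ ↔
      ∃ p : H × H, rowOp B₁ B₂ ((WithLp.equiv 2 (H × H)).symm p) =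
          scalarRow H w₁ w₂ ((WithLp.equiv 2 (H × H)).symm p) ∧
        ∀ h : H, p ≠ (B₁ h - w₁ • h, w₂ • h - B₂ h) :=
  ((Equiv.refl H).prodCongr (Equiv.neg H)).exists_congr fun p => by
    refine and_congr ?_ (forall_congr' fun h => ?_)
    · rw [rowOp_apply, scalarRow_apply, ← sub_eq_zero (b := _ + _), add_sub_add_comm]
      simp [sub_eq_add_neg, add_comm]
    · simp [Prod.ext_iff, neg_eq_iff_eq_neg]

variable [CompleteSpace H]

theorem adjoint_smul_one (z : ℂ) : (z • (1 : H →L[ℂ] H))† = conj z • 1 := by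
  rw [map_smulₛₗ, one_def, adjoint_id]

theorem scalarRow_comp_adjoint_rowOp (z₁ z₂ : ℂ) (A₁ A₂ : H →L[ℂ] H) :
    scalarRow H z₁ z₂ ∘L (rowOp A₁ A₂)† = z₁ • A₁† + z₂ • A₂† := by
  simp only [scalarRow, rowOp_comp_adjoint_rowOp, smul_comp, one_def, id_comp]

theorem scalarRow_comp_adjoint_scalarRow (z₁ z₂ w₁ w₂ : ℂ) :
    scalarRow H z₁ z₂ ∘L (scalarRow H w₁ w₂)† = (z₁ * conj w₁ + z₂ * conj w₂) • 1 := by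
  rw [scalarRow.eq_def H w₁, scalarRow_comp_adjoint_rowOp, adjoint_smul_one, adjoint_smul_one,
    smul_smul, smul_smul, add_smul]

theorem scalarRow_comp_adjoint_self (z₁ z₂ : ℂ) :
    scalarRow H z₁ z₂ ∘L (scalarRow H z₁ z₂)† = ((‖z₁‖ ^ 2 + ‖z₂‖ ^ 2 : ℝ) : ℂ) • 1 := by
  rw [scalarRow_comp_adjoint_scalarRow, Complex.mul_conj', Complex.mul_conj']
  push_cast
  rfl

theorem scalarRow_comp_adjoint_self_of_norm_sq_add_norm_sq_eq {m₁ m₂ : ℂ} {s : ℝ}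
    (hm : ‖m₁‖ ^ 2 + ‖m₂‖ ^ 2 = 1 - s ^ 2) :
    scalarRow H m₁ m₂ ∘L (scalarRow H m₁ m₂)† = (1 - (s : ℂ) ^ 2) • 1 := by
  rw [scalarRow_comp_adjoint_self, hm]
  push_cast
  rfl

theorem defectOp_adjoint_scalarRow {m₁ m₂ : ℂ} {s : ℝ} (hs : 0 ≤ s)
    (hm : ‖m₁‖ ^ 2 + ‖m₂‖ ^ 2 = 1 - s ^ 2) :
    defectOp ((scalarRow H m₁ m₂)†) = (s : ℂ) • 1 :=
  defectOp_adjoint_of_comp_adjoint_eq_smul hs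
    (scalarRow_comp_adjoint_self_of_norm_sq_add_norm_sq_eq hm)

theorem injective_defectOp_adjoint_scalarRow {m₁ m₂ : ℂ} {s : ℝ} (hs : 0 < s)
    (hm : ‖m₁‖ ^ 2 + ‖m₂‖ ^ 2 = 1 - s ^ 2) :
    Function.Injective (defectOp ((scalarRow H m₁ m₂)†)) := by
  rw [defectOp_adjoint_scalarRow hs.le hm]
  exact smul_right_injective H (Complex.ofReal_ne_zero.2 hs.ne')

theorem isUnit_one_sub_scalarRow_comp_adjoint {z₁ z₂ w₁ w₂ : ℂ} (hz : ‖z₁‖ ^ 2 + ‖z₂‖ ^ 2 < 1)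
    (hw : ‖w₁‖ ^ 2 + ‖w₂‖ ^ 2 < 1) : IsUnit (1 - scalarRow H z₁ z₂ ∘L (scalarRow H w₁ w₂)†) := by
  have hscalar : 1 - scalarRow H z₁ z₂ ∘L (scalarRow H w₁ w₂)† =
      (1 - (z₁ * conj w₁ + z₂ * conj w₂)) • 1 := by
    rw [scalarRow_comp_adjoint_scalarRow, sub_smul, one_smul]
  rw [hscalar]
  exact isUnit_one.smul (Units.mk0 _ (one_sub_pairing_ne_zero hz hw))

theorem ballAutomorphism_scalarRow {m₁ m₂ z₁ z₂ ip : ℂ} {s : ℝ} (hs : 0 ≤ s)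
    (hm : ‖m₁‖ ^ 2 + ‖m₂‖ ^ 2 = 1 - s ^ 2) (hm0 : (m₁, m₂) ≠ (0, 0))
    (hip : ip = z₁ * conj m₁ + z₂ * conj m₂) (hip1 : 1 - ip ≠ 0) :
    ballAutomorphism (scalarRow H m₁ m₂) (scalarRow H z₁ z₂) =
      scalarRow H
        (m₁ - (s / (1 - ip)) * (z₁ - (1 - s) * (ip / ((‖m₁‖ ^ 2 + ‖m₂‖ ^ 2 : ℝ) : ℂ)) * m₁))
        (m₂ - (s / (1 - ip)) * (z₂ - (1 - s) * (ip / ((‖m₁‖ ^ 2 + ‖m₂‖ ^ 2 : ℝ) : ℂ)) * m₂)) := by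
  have hcast : ((‖m₁‖ ^ 2 + ‖m₂‖ ^ 2 : ℝ) : ℂ) = 1 - (s : ℂ) ^ 2 := by rw [hm]; push_cast; rfl
  have hs1 : 1 - (s : ℂ) ^ 2 ≠ 0 := by
    rw [← hcast, Complex.ofReal_ne_zero]
    contrapose! hm0
    rw [add_eq_zero_iff_of_nonneg (by positivity) (by positivity)] at hm0
    simpa using hm0
  have hL := scalarRow_comp_adjoint_self_of_norm_sq_add_norm_sq_eq (H := H) hm
  have hZ : scalarRow H z₁ z₂ ∘L (scalarRow H m₁ m₂)† = ip • 1 := by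
    rw [scalarRow_comp_adjoint_scalarRow, hip]
  rw [hcast, one_sub_mul_div_one_sub_sq hs1, ballAutomorphism_of_comp_adjoint_eq_smul hs hL hZ hip1]
  simp only [smul_scalarRow, scalarRow_sub]

theorem mem_middleTaylorSpectrum_iff_exists_characteristicFn_eq_zero
    {A : WithLp 2 (H × H) →L[ℂ] H} {B₁ B₂ : H →L[ℂ] H} {m₁ m₂ z₁ z₂ w₁ w₂ : ℂ}
    (hm : ‖m₁‖ ^ 2 + ‖m₂‖ ^ 2 < 1) (hz : ‖z₁‖ ^ 2 + ‖z₂‖ ^ 2 < 1)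
    (hA : ‖A‖ ≤ 1) (hinjA : Function.Injective (defectOp (A†)))
    (hinjL : Function.Injective (defectOp ((scalarRow H m₁ m₂)†)))
    (hZA : IsUnit (1 - scalarRow H z₁ z₂ ∘L A†)) (hAL : IsUnit (1 - A ∘L (scalarRow H m₁ m₂)†))
    (hLA : IsUnit (1 - (scalarRow H m₁ m₂)† ∘L A))
    (hΦA : ballAutomorphism (scalarRow H m₁ m₂) A = rowOp B₁ B₂)
    (hΦZ : ballAutomorphism (scalarRow H m₁ m₂) (scalarRow H z₁ z₂) = scalarRow H w₁ w₂) :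
    (w₁, w₂) ∈ middleTaylorSpectrum B₁ B₂ ↔
      ∃ p : H × H, characteristicFn A (scalarRow H z₁ z₂) (defectOp A
          ((1 - (scalarRow H m₁ m₂)† ∘L A)⁻¹ʳ
            (defectOp (scalarRow H m₁ m₂) ((WithLp.equiv 2 (H × H)).symm p)))) = 0 ∧
        ∀ h : H, p ≠ (B₁ h - w₁ • h, w₂ • h - B₂ h) := by
  simp only [characteristicFn_eq_zero_iff_ballAutomorphism_eq hA hinjA hinjL hZA hAL hLA
    (isUnit_one_sub_scalarRow_comp_adjoint hz hm), hΦA, hΦZ, mem_middleTaylorSpectrum_iff]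

end Rows

theorem sigma_two_phi_char_general
    {H : Type*} [NormedAddCommGroup H] [InnerProductSpace ℂ H] [CompleteSpace H]
    (A₁ A₂ : H →L[ℂ] H)
    (Dstar : H →L[ℂ] H) (hDstar_pos : 0 ≤ Dstar)
    (hDstar_sq : Dstar * Dstar = 1 - A₁ * adjoint A₁ - A₂ * adjoint A₂)
    (hDstar_inj : Function.Injective ⇑Dstar)
    (Arow : WithLp 2 (H × H) →L[ℂ] H)
    (hArow : ∀ x y : H, Arow ((WithLp.equiv 2 (H × H)).symm (x, y)) = A₁ x + A₂ y)
    (DA : WithLp 2 (H × H) →L[ℂ] WithLp 2 (H × H)) (hDA_pos : 0 ≤ DA)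
    (hDA_sq : DA * DA = 1 - (adjoint Arow) ∘L Arow)
    (μ₁ μ₂ : ℂ) (hμ : ‖μ₁‖ ^ 2 + ‖μ₂‖ ^ 2 < 1) (hμ0 : (μ₁, μ₂) ≠ ((0 : ℂ), (0 : ℂ)))
    (s : ℝ) (hs : s = Real.sqrt (1 - ‖μ₁‖ ^ 2 - ‖μ₂‖ ^ 2))
    (Lrow : WithLp 2 (H × H) →L[ℂ] H)
    (hLrow : ∀ x y : H, Lrow ((WithLp.equiv 2 (H × H)).symm (x, y)) = μ₁ • x + μ₂ • y)
    (DL : WithLp 2 (H × H) →L[ℂ] WithLp 2 (H × H)) (hDL_pos : 0 ≤ DL)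
    (hDL_sq : DL * DL = 1 - (adjoint Lrow) ∘L Lrow)
    (T₁ : H →L[ℂ] H) (hT₁ : T₁ * (1 - Arow ∘L adjoint Lrow) = 1)
    (hT₁' : (1 - Arow ∘L adjoint Lrow) * T₁ = 1)
    (S₂ : WithLp 2 (H × H) →L[ℂ] WithLp 2 (H × H))
    (hS₂ : S₂ * (1 - (adjoint Lrow) ∘L Arow) = 1) (hS₂' : (1 - (adjoint Lrow) ∘L Arow) * S₂ = 1)
    (B₁ B₂ : H →L[ℂ] H)
    (hB : ∀ x y : H, (Lrow - (s : ℂ) • (T₁ ∘L Arow ∘L DL))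
      ((WithLp.equiv 2 (H × H)).symm (x, y)) = B₁ x + B₂ y)
    (z₁ z₂ : ℂ) (hz : ‖z₁‖ ^ 2 + ‖z₂‖ ^ 2 < 1)
    (R : H →L[ℂ] H) (hR₁ : R * (1 - z₁ • adjoint A₁ - z₂ • adjoint A₂) = 1)
    (hR₂ : (1 - z₁ • adjoint A₁ - z₂ • adjoint A₂) * R = 1)
    (Zrow : WithLp 2 (H × H) →L[ℂ] H)
    (hZrow : ∀ x y : H, Zrow ((WithLp.equiv 2 (H × H)).symm (x, y)) = z₁ • x + z₂ • y)
    (ip : ℂ) (hip : ip = z₁ * (starRingEnd ℂ) μ₁ + z₂ * (starRingEnd ℂ) μ₂)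
    (w₁ w₂ : ℂ)
    (hw₁ : w₁ = μ₁ -
      ((s : ℂ) / (1 - ip)) * (z₁ - (1 - (s : ℂ)) * (ip / ((‖μ₁‖ ^ 2 + ‖μ₂‖ ^ 2 : ℝ) : ℂ)) * μ₁))
    (hw₂ : w₂ = μ₂ -
      ((s : ℂ) / (1 - ip)) * (z₂ - (1 - (s : ℂ)) * (ip / ((‖μ₁‖ ^ 2 + ‖μ₂‖ ^ 2 : ℝ) : ℂ)) * μ₂)) :
    (∃ p : H × H, (B₁ p.1 - w₁ • p.1) - (B₂ p.2 - w₂ • p.2) = 0 ∧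
        ∀ h : H, p ≠ (B₁ h - w₁ • h, B₂ h - w₂ • h)) ↔
      ∃ p : H × H, (-Arow + Dstar ∘L R ∘L Zrow ∘L DA)
          (DA (S₂ (DL ((WithLp.equiv 2 (H × H)).symm p)))) = 0 ∧
        ∀ h : H, p ≠ (B₁ h - w₁ • h, w₂ • h - B₂ h) := by
  obtain rfl := eq_rowOp hArow
  obtain rfl := eq_scalarRow hLrow
  obtain rfl := eq_scalarRow hZrow
  have hs0 : 0 < s := hs ▸ Real.sqrt_pos.2 (by linarith)
  have hμs : ‖μ₁‖ ^ 2 + ‖μ₂‖ ^ 2 = 1 - s ^ 2 := by rw [hs, Real.sq_sqrt (by linarith)]; ring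
  have hDstar : Dstar * Dstar = 1 - rowOp A₁ A₂ ∘L adjoint (rowOp A₁ A₂) := by
    rw [hDstar_sq, rowOp_comp_adjoint_rowOp, sub_sub]; rfl
  have hDstar_eq : defectOp (adjoint (rowOp A₁ A₂)) = Dstar :=
    defectOp_eq_of_mul_self hDstar_pos (by rwa [adjoint_adjoint])
  have hDA_eq : defectOp (rowOp A₁ A₂) = DA := defectOp_eq_of_mul_self hDA_pos hDA_sq
  have hDL_eq : defectOp (scalarRow H μ₁ μ₂) = DL := defectOp_eq_of_mul_self hDL_pos hDL_sq
  have hDLstar_eq := defectOp_adjoint_scalarRow (H := H) hs0.le hμs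
  rw [sub_sub, ← scalarRow_comp_adjoint_rowOp] at hR₁ hR₂
  obtain ⟨hZA, hR⟩ := isUnit_and_inverse_eq_of_mul_eq_one hR₁ hR₂
  obtain ⟨hAL, hT⟩ := isUnit_and_inverse_eq_of_mul_eq_one hT₁ hT₁'
  obtain ⟨hLA, hS⟩ := isUnit_and_inverse_eq_of_mul_eq_one hS₂ hS₂'
  have hnorm : ‖rowOp A₁ A₂‖ ≤ 1 :=
    norm_le_one_of_mul_self_eq_one_sub_comp_adjoint hDstar_pos.isSelfAdjoint hDstar
  rw [← hDstar_eq] at hDstar_inj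
  have hΦA : ballAutomorphism (scalarRow H μ₁ μ₂) (rowOp A₁ A₂) = rowOp B₁ B₂ :=
    eq_rowOp fun x y => by rw [← hB, ballAutomorphism, hDLstar_eq, hDL_eq, hT]; rfl
  have hΦZ : ballAutomorphism (scalarRow H μ₁ μ₂) (scalarRow H z₁ z₂) = scalarRow H w₁ w₂ := by
    rw [hw₁, hw₂, ballAutomorphism_scalarRow hs0.le hμs hμ0 hip
      (hip ▸ one_sub_pairing_ne_zero hz hμ)]
  have hmain := mem_middleTaylorSpectrum_iff_exists_characteristicFn_eq_zero
    hμ hz hnorm hDstar_inj (injective_defectOp_adjoint_scalarRow hs0 hμs) hZA hAL hLA hΦA hΦZ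
  rwa [characteristicFn, hDstar_eq, hDA_eq, hDL_eq, hR, hS] at hmain

theorem sigma_two_phi_char
    {H : Type*} [NormedAddCommGroup H] [InnerProductSpace ℂ H] [CompleteSpace H]
    (A₁ A₂ : H →L[ℂ] H)
    (hcomm : A₁ * A₂ = A₂ * A₁)
    (hcontr : A₁ * adjoint A₁ + A₂ * adjoint A₂ ≤ 1)
    (hpure : ∀ x : H, Tendsto (fun n => ((A₁ * adjoint A₁ + A₂ * adjoint A₂) ^ n) x) atTop (nhds 0))
    (Dstar : H →L[ℂ] H) (hDstar_pos : 0 ≤ Dstar)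
    (hDstar_sq : Dstar * Dstar = 1 - A₁ * adjoint A₁ - A₂ * adjoint A₂)
    (hDstar_inj : Function.Injective ⇑Dstar)
    (Arow : WithLp 2 (H × H) →L[ℂ] H)
    (hArow : ∀ x y : H, Arow ((WithLp.equiv 2 (H × H)).symm (x, y)) = A₁ x + A₂ y)
    (DA : WithLp 2 (H × H) →L[ℂ] WithLp 2 (H × H)) (hDA_pos : 0 ≤ DA)
    (hDA_sq : DA * DA = 1 - (adjoint Arow) ∘L Arow)
    (μ₁ μ₂ : ℂ) (hμ : ‖μ₁‖ ^ 2 + ‖μ₂‖ ^ 2 < 1) (hμ0 : (μ₁, μ₂) ≠ ((0 : ℂ), (0 : ℂ)))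
    (s : ℝ) (hs : s = Real.sqrt (1 - ‖μ₁‖ ^ 2 - ‖μ₂‖ ^ 2))
    (Lrow : WithLp 2 (H × H) →L[ℂ] H)
    (hLrow : ∀ x y : H, Lrow ((WithLp.equiv 2 (H × H)).symm (x, y)) = μ₁ • x + μ₂ • y)
    (DL : WithLp 2 (H × H) →L[ℂ] WithLp 2 (H × H)) (hDL_pos : 0 ≤ DL)
    (hDL_sq : DL * DL = 1 - (adjoint Lrow) ∘L Lrow)
    (T₁ : H →L[ℂ] H) (hT₁ : T₁ * (1 - Arow ∘L adjoint Lrow) = 1)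
    (hT₁' : (1 - Arow ∘L adjoint Lrow) * T₁ = 1)
    (S₂ : WithLp 2 (H × H) →L[ℂ] WithLp 2 (H × H))
    (hS₂ : S₂ * (1 - (adjoint Lrow) ∘L Arow) = 1) (hS₂' : (1 - (adjoint Lrow) ∘L Arow) * S₂ = 1)
    (B₁ B₂ : H →L[ℂ] H)
    (hB : ∀ x y : H, (Lrow - (s : ℂ) • (T₁ ∘L Arow ∘L DL)) ((WithLp.equiv 2 (H × H)).symm (x, y)) = B₁ x + B₂ y)
    (hBpure : ∀ x : H, Tendsto (fun n => ((B₁ * adjoint B₁ + B₂ * adjoint B₂) ^ n) x) atTop (nhds 0))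
    (z₁ z₂ : ℂ) (hz : ‖z₁‖ ^ 2 + ‖z₂‖ ^ 2 < 1)
    (R : H →L[ℂ] H) (hR₁ : R * (1 - z₁ • adjoint A₁ - z₂ • adjoint A₂) = 1)
    (hR₂ : (1 - z₁ • adjoint A₁ - z₂ • adjoint A₂) * R = 1)
    (Zrow : WithLp 2 (H × H) →L[ℂ] H)
    (hZrow : ∀ x y : H, Zrow ((WithLp.equiv 2 (H × H)).symm (x, y)) = z₁ • x + z₂ • y)
    (ip : ℂ) (hip : ip = z₁ * (starRingEnd ℂ) μ₁ + z₂ * (starRingEnd ℂ) μ₂)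
    (w₁ w₂ : ℂ)
    (hw₁ : w₁ = μ₁ - ((s : ℂ) / (1 - ip)) * (z₁ - (1 - (s : ℂ)) * (ip / ((‖μ₁‖ ^ 2 + ‖μ₂‖ ^ 2 : ℝ) : ℂ)) * μ₁))
    (hw₂ : w₂ = μ₂ - ((s : ℂ) / (1 - ip)) * (z₂ - (1 - (s : ℂ)) * (ip / ((‖μ₁‖ ^ 2 + ‖μ₂‖ ^ 2 : ℝ) : ℂ)) * μ₂)) :
    (∃ p : H × H, (B₁ p.1 - w₁ • p.1) - (B₂ p.2 - w₂ • p.2) = 0 ∧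
        ∀ h : H, p ≠ (B₁ h - w₁ • h, B₂ h - w₂ • h)) ↔
      ∃ p : H × H, (-Arow + Dstar ∘L R ∘L Zrow ∘L DA) (DA (S₂ (DL ((WithLp.equiv 2 (H × H)).symm p)))) = 0 ∧
        ∀ h : H, p ≠ (B₁ h - w₁ • h, w₂ • h - B₂ h) := by
  exact sigma_two_phi_char_general A₁ A₂ Dstar hDstar_pos hDstar_sq hDstar_inj Arow hArow DA hDA_pos
    hDA_sq μ₁ μ₂ hμ hμ0 s hs Lrow hLrow DL hDL_pos hDL_sq T₁ hT₁ hT₁' S₂ hS₂ hS₂' B₁ B₂ hB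
    z₁ z₂ hz R hR₁ hR₂ Zrow hZrow ip hip w₁ w₂ hw₁ hw₂
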